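/- For every θ ∈ (0,π), the integral I_θ = −(1/π)∫_{D_θ} 1/(conj(u+1)·(u−1)) da(u) over the open disc D_θ of radius csc θ centered at i·cot θ exists and equals ln(2·sin θ) + i·(π/2 − θ). -/

import Mathlib

open MeasureTheory

/-- The open disc `D_θ` of radius `csc θ` centered at `i·cot θ`. -/
noncomputable def Dtheta (θ : ℝ) : Set ℂ :=
  Metric.ball (Complex.I * (Real.cot θ : ℂ)) ((Real.sin θ)⁻¹)

lemma polar_aux (f : ℂ → ℂ) (hm : Measurable f) (hf : Integrable f) :
    ∫ u, f u = ∫ r in Set.Ioi (0:ℝ), (r:ℂ) * ∫ t in Set.Ioo (-Real.pi) Real.pi, f (circleMap 0 r t) := by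
  have hsymm : ∀ p : ℝ × ℝ, Complex.polarCoord.symm p = circleMap 0 p.1 p.2 := by
    intro p
    rw [Complex.polarCoord_symm_apply, circleMap, Complex.exp_mul_I]
    push_cast; ring
  have hint : IntegrableOn (fun p : ℝ × ℝ => p.1 • f (circleMap 0 p.1 p.2))
      (Set.Ioi (0:ℝ) ×ˢ Set.Ioo (-Real.pi) Real.pi) (volume.prod volume) := by
    have hmeas : Measurable (fun p : ℝ × ℝ => p.1 • f (circleMap 0 p.1 p.2)) := by
      refine measurable_fst.smul (hm.comp ?_)
      have : Continuous (fun p : ℝ × ℝ => circleMap 0 p.1 p.2) := by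
        unfold circleMap; fun_prop
      exact this.measurable
    refine ⟨hmeas.aestronglyMeasurable, ?_⟩
    have h := Complex.lintegral_comp_polarCoord_symm (fun u => ‖f u‖ₑ)
    have h2 := hf.2
    unfold HasFiniteIntegral at *
    rw [← h] at h2
    refine lt_of_le_of_lt (le_of_eq ?_) h2
    refine setLIntegral_congr_fun (measurableSet_Ioi.prod measurableSet_Ioo) ?_
    intro p hp
    have hp1 : (0:ℝ) < p.1 := hp.1
    simp only [hsymm, enorm_smul, smul_eq_mul]
    rw [Real.enorm_eq_ofReal hp1.le]
  rw [← Complex.integral_comp_polarCoord_symm]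
  simp only [hsymm]
  rw [polarCoord_target, Measure.volume_eq_prod, setIntegral_prod _ hint]
  simp only [Complex.real_smul, integral_const_mul]

lemma circle_aux (a b : ℂ) (r : ℝ) (hr : 0 < r) (ha : r < ‖a‖) (hb : r < ‖b‖) :
    ∫ t in Set.Ioo (-Real.pi) Real.pi,
      1 / ((starRingEnd ℂ) (circleMap 0 r t - b) * (circleMap 0 r t - a))
      = 2 * Real.pi / (a * (starRingEnd ℂ) b - r ^ 2) := by
  have hb0 : (starRingEnd ℂ) b ≠ 0 := by
    rw [Ne, map_eq_zero]; rintro rfl; simp at hb; linarith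
  set B := (starRingEnd ℂ) b with hB
  have hBn : ‖B‖ = ‖b‖ := by simp [hB]
  have hBpos : 0 < ‖B‖ := by rw [hBn]; linarith
  set p : ℂ := r ^ 2 / B with hp
  have hpn : ‖p‖ < r := by
    rw [hp, norm_div, div_lt_iff₀ hBpos, hBn]
    simp [abs_of_pos hr]; nlinarith
  have hpa : p - a ≠ 0 := by
    intro h; rw [sub_eq_zero.1 h] at hpn; linarith
  have hC : (∮ z in C(0, r), (z - p)⁻¹ • ((-1 / (B * Complex.I)) * (z - a)⁻¹))
      = (2 * Real.pi * Complex.I : ℂ) • ((-1 / (B * Complex.I)) * (p - a)⁻¹) := by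
    refine DifferentiableOn.circleIntegral_sub_inv_smul ?_ (by simpa using hpn)
    intro z hz
    have : z - a ≠ 0 := by
      intro h; rw [sub_eq_zero.1 h] at hz; simp at hz; linarith
    exact (by fun_prop (disch := assumption) : DifferentiableAt ℂ (fun z => (-1 / (B * Complex.I)) * (z - a)⁻¹) z).differentiableWithinAt
  rw [← integral_Ioc_eq_integral_Ioo, ← intervalIntegral.integral_of_le (by linarith [Real.pi_pos])]
  have hper : Function.Periodic (fun t => 1 / ((starRingEnd ℂ) (circleMap 0 r t - b) * (circleMap 0 r t - a))) (2 * Real.pi) := by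
    intro t; simp only [periodic_circleMap 0 r t]
  have hs := hper.intervalIntegral_add_eq (-Real.pi) 0
  rw [show -Real.pi + 2 * Real.pi = Real.pi by ring, zero_add] at hs
  rw [hs]
  have key : ∫ t in (0:ℝ)..(2 * Real.pi), 1 / ((starRingEnd ℂ) (circleMap 0 r t - b) * (circleMap 0 r t - a))
      = (∮ z in C(0, r), (z - p)⁻¹ • ((-1 / (B * Complex.I)) * (z - a)⁻¹)) := by
    unfold circleIntegral
    refine intervalIntegral.integral_congr (fun t _ => ?_)
    simp only [deriv_circleMap, smul_eq_mul, map_sub, ← hB]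
    have hn : ‖circleMap 0 r t‖ = r := by simp [abs_of_pos hr]
    generalize circleMap 0 r t = w at hn
    have hw0 : w ≠ 0 := by rintro rfl; simp at hn; linarith
    have hcw : (starRingEnd ℂ) w = r ^ 2 / w := by
      rw [eq_div_iff hw0, mul_comm, Complex.mul_conj, Complex.normSq_eq_norm_sq, hn]; simp
    have hwa : w - a ≠ 0 := by
      intro h; rw [sub_eq_zero.1 h] at hn; linarith
    have hwp : w - p ≠ 0 := by
      intro h; rw [← sub_eq_zero.1 h] at hpn; linarith
    have e : (starRingEnd ℂ) w - B = - B * (w - p) / w := by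
      rw [hcw, hp]; field_simp; ring
    rw [e]
    field_simp
  rw [key, hC, smul_eq_mul]
  have e : a * B - r ^ 2 = - B * (p - a) := by rw [hp]; field_simp; ring
  rw [e]
  field_simp

lemma meas_aux (a b : ℂ) :
    Measurable (fun u : ℂ => 1 / ((starRingEnd ℂ) (u - b) * (u - a))) := by
  have h : Continuous (fun u : ℂ => (starRingEnd ℂ) (u - b) * (u - a)) := by fun_prop
  exact measurable_const.div h.measurable

lemma integrable_aux (a b : ℂ) (hab : a ≠ b) (R : ℝ) :
    IntegrableOn (fun u : ℂ => 1 / ((starRingEnd ℂ) (u - b) * (u - a))) (Metric.ball 0 R) := by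
  have hl : LocallyIntegrable (fun u : ℂ => ‖u‖⁻¹) := by
    refine locallyIntegrable_of_norm_le_rpow (C := 1) (α := 1) (by simp) (by simp)
      ?_ (by measurability)
    filter_upwards with x
    simp [Real.rpow_neg_one]
  have h1 : ∀ c : ℂ, IntegrableOn (fun u : ℂ => ‖u - c‖⁻¹) (Metric.ball 0 R) := by
    intro c
    have := (hl.integrableOn_isCompact (isCompact_closedBall (-c) R))
    have h2 := (measurePreserving_sub_right volume c).integrableOn_comp_preimage (MeasurableEquiv.subRight c).measurableEmbedding (f := fun u : ℂ => ‖u‖⁻¹) (s := Metric.closedBall (-c) R)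
    refine (h2.2 this).mono_set ?_
    intro x hx
    simp at hx ⊢
    linarith
  have h3 := ((h1 a).add (h1 b)).const_mul (‖a - b‖⁻¹)
  have hm : Measurable (fun u : ℂ => 1 / ((starRingEnd ℂ) (u - b) * (u - a))) := meas_aux a b
  refine h3.mono' hm.aestronglyMeasurable ?_
  filter_upwards with u
  have hd : 0 < ‖a - b‖ := norm_pos_iff.2 (sub_ne_zero.2 hab)
  simp only [norm_div, norm_mul, norm_one, RCLike.norm_conj, Pi.add_apply]
  by_cases ha : ‖u - a‖ = 0
  · simp [ha]; positivity
  by_cases hb : ‖u - b‖ = 0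
  · simp [hb]; positivity
  have ha' : 0 < ‖u - a‖ := lt_of_le_of_ne (norm_nonneg _) (Ne.symm ha)
  have hb' : 0 < ‖u - b‖ := lt_of_le_of_ne (norm_nonneg _) (Ne.symm hb)
  have ht : ‖a - b‖ ≤ ‖u - a‖ + ‖u - b‖ := by
    have := norm_sub_le (u - b) (u - a)
    rw [show u - b - (u - a) = a - b by ring] at this; linarith
  rw [show ‖a - b‖⁻¹ * (‖u - a‖⁻¹ + ‖u - b‖⁻¹) = ((‖u - a‖ + ‖u - b‖) / ‖a - b‖) * (1 / (‖u - b‖ * ‖u - a‖)) by field_simp; ring]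
  refine le_mul_of_one_le_left (by positivity) ?_
  rwa [one_le_div hd]

lemma log_aux (R : ℝ) (K : ℂ) (hR : 0 < R) (hK : ‖K‖ = R ^ 2) (hK1 : K ≠ R ^ 2) :
    ∫ r in (0:ℝ)..R, (r:ℂ) * (2 * Real.pi / (K - r ^ 2)) = - Real.pi * Complex.log (1 - R ^ 2 / K) := by
  have hK0 : K ≠ 0 := by rintro rfl; simp at hK; nlinarith [pow_pos hR 2]
  have hsl : ∀ r ∈ Set.uIcc (0:ℝ) R, 1 - (r:ℂ) ^ 2 / K ∈ Complex.slitPlane := by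
    intro r hr
    rw [Set.uIcc_of_le hR.le] at hr
    have hn : ‖(r:ℂ) ^ 2 / K‖ ≤ 1 := by
      rw [norm_div, hK, norm_pow, Complex.norm_real, Real.norm_eq_abs, sq_abs]
      rw [div_le_one (by positivity)]
      exact pow_le_pow_left₀ hr.1 hr.2 2
    have hne : (r:ℂ) ^ 2 / K ≠ 1 := by
      intro h
      rw [div_eq_one_iff_eq hK0] at h
      rw [← h] at hK hK1
      simp at hK
      have : r = R := by nlinarith [hr.1]
      rw [this] at hK1; exact hK1 rfl
    generalize (r:ℂ) ^ 2 / K = w at hn hne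
    by_contra hc
    rw [Complex.mem_slitPlane_iff] at hc
    push Not at hc
    simp at hc
    have h1 := Complex.re_le_norm w
    apply hne
    apply Complex.ext
    · simp; linarith
    · simpa using hc.2
  have hne : ∀ r ∈ Set.uIcc (0:ℝ) R, K - (r:ℂ) ^ 2 ≠ 0 := by
    intro r hr h
    have := Complex.slitPlane_ne_zero (hsl r hr)
    apply this
    rw [← sub_eq_zero.1 h, div_self hK0, sub_self]
  have hd : ∀ r ∈ Set.uIcc (0:ℝ) R, HasDerivAt (fun r : ℝ => - Real.pi * Complex.log (1 - (r:ℂ) ^ 2 / K))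
      ((r:ℂ) * (2 * Real.pi / (K - r ^ 2))) r := by
    intro r hr
    have h1 : HasDerivAt (fun r : ℝ => 1 - (r:ℂ) ^ 2 / K) (-(2 * r / K)) r := by
      have := (((hasDerivAt_id (r:ℂ)).pow 2).div_const K).const_sub 1
      simpa using this.comp_ofReal
    have h2 := (h1.clog_real (hsl r hr)).const_mul (- Real.pi : ℂ)
    refine h2.congr_deriv ?_
    have h3 := hne r hr
    have h4 := Complex.slitPlane_ne_zero (hsl r hr)
    rw [show 1 - (r:ℂ)^2 / K = (K - r^2) / K by field_simp]
    field_simp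
  rw [intervalIntegral.integral_eq_sub_of_hasDerivAt hd]
  · simp
  · apply ContinuousOn.intervalIntegrable
    intro r hr
    have := hne r hr
    apply ContinuousAt.continuousWithinAt
    fun_prop (disch := assumption)

lemma disc_aux (a b : ℂ) (hab : a ≠ b) (R : ℝ) (hR : 0 < R) (ha : ‖a‖ = R) (hb : ‖b‖ = R) :
    ∫ u in Metric.ball (0:ℂ) R, 1 / ((starRingEnd ℂ) (u - b) * (u - a))
      = - Real.pi * Complex.log (1 - R ^ 2 / (a * (starRingEnd ℂ) b)) := by
  rw [← integral_indicator measurableSet_ball, polar_aux _ ((meas_aux a b).indicator measurableSet_ball)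
    ((integrable_indicator_iff measurableSet_ball).2 (integrable_aux a b hab R))]
  rw [← log_aux R (a * (starRingEnd ℂ) b) hR (by simp [ha, hb, sq])]
  · rw [intervalIntegral.integral_of_le hR.le, integral_Ioc_eq_integral_Ioo]
    rw [show Set.Ioo (0:ℝ) R = Set.Ioi 0 ∩ Set.Iio R from rfl,
      ← setIntegral_indicator measurableSet_Iio]
    refine setIntegral_congr_fun measurableSet_Ioi (fun r hr => ?_)
    have hr' : 0 < r := hr
    by_cases h : r < R
    · have hmem : ∀ t, circleMap 0 r t ∈ Metric.ball (0:ℂ) R := by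
        intro t; simp [abs_of_pos hr', h]
      simp only [Set.indicator_of_mem (hmem _), Set.indicator_of_mem (show r ∈ Set.Iio R from h)]
      rw [circle_aux a b r hr' (ha ▸ h) (hb ▸ h)]
    · have hmem : ∀ t, circleMap 0 r t ∉ Metric.ball (0:ℂ) R := by
        intro t; simpa [abs_of_pos hr'] using h
      simp only [Set.indicator_of_notMem (hmem _), Set.indicator_of_notMem (show r ∉ Set.Iio R from h)]
      simp
  · intro h
    apply hab
    have hb0 : (starRingEnd ℂ) b ≠ 0 := by
      rw [Ne, map_eq_zero]; rintro rfl; simp at hb; linarith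
    apply mul_right_cancel₀ hb0
    rw [h, Complex.mul_conj, Complex.normSq_eq_norm_sq, hb]; simp

/-- For `θ ∈ (0,π)`, the integral `I_θ = -(1/π)∫_{D_θ} 1/(conj(u+1)·(u-1)) da(u)` exists
and equals `ln(2 sin θ) + i(π/2 - θ)`. -/
theorem integral_kernel_disc_eq
    (θ : ℝ) (hθ : θ ∈ Set.Ioo (0 : ℝ) Real.pi) :
    IntegrableOn (fun u : ℂ => 1 / ((starRingEnd ℂ) (u + 1) * (u - 1))) (Dtheta θ) volume ∧
    -(1 / Real.pi : ℂ) * (∫ u in Dtheta θ, 1 / ((starRingEnd ℂ) (u + 1) * (u - 1))) =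
      (Real.log (2 * Real.sin θ) : ℂ) + Complex.I * ((Real.pi / 2 : ℝ) - θ) := by
  obtain ⟨h0, hpi⟩ := hθ
  have hs : 0 < Real.sin θ := Real.sin_pos_of_pos_of_lt_pi h0 hpi
  have hsC : Complex.sin θ ≠ 0 := by
    rw [← Complex.ofReal_sin]; exact_mod_cast hs.ne'
  set R := (Real.sin θ)⁻¹ with hRdef
  have hR : 0 < R := inv_pos.2 hs
  set c : ℂ := Complex.I * (Real.cot θ : ℂ) with hc
  have hcot : Real.cot θ = Real.cos θ * R := by rw [Real.cot_eq_cos_div_sin]; rfl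
  have hsR : Real.sin θ * R = 1 := mul_inv_cancel₀ hs.ne'
  have hsc := Real.sin_sq_add_cos_sq θ
  have hnorm : 1 + Real.cot θ ^ 2 = R ^ 2 := by
    rw [hcot]
    linear_combination (-(Real.sin θ * R) - 1) * hsR + R ^ 2 * hsc
  have ha : ‖1 - c‖ = R := by
    rw [← sq_eq_sq₀ (norm_nonneg _) hR.le, ← Complex.normSq_eq_norm_sq, Complex.normSq_apply, ← hnorm]
    simp [hc, -Complex.ofReal_cot]; ring
  have hb : ‖-1 - c‖ = R := by
    rw [← sq_eq_sq₀ (norm_nonneg _) hR.le, ← Complex.normSq_eq_norm_sq, Complex.normSq_apply, ← hnorm]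
    simp [hc, -Complex.ofReal_cot]; ring
  have hab : 1 - c ≠ -1 - c := by
    intro h
    have := sub_left_inj.1 h
    norm_num at this
  have hfun : (fun u : ℂ => 1 / ((starRingEnd ℂ) (u + 1) * (u - 1))) ∘ (fun w => w + c)
      = fun u => 1 / ((starRingEnd ℂ) (u - (-1 - c)) * (u - (1 - c))) := by
    funext w
    simp only [Function.comp]
    rw [show w + c + 1 = w - (-1 - c) by ring, show w + c - 1 = w - (1 - c) by ring]
  have hpre : (fun w => w + c) ⁻¹' (Dtheta θ) = Metric.ball 0 R := by
    ext w
    rw [Set.mem_preimage, Dtheta, ← hc, ← hRdef, Metric.mem_ball, dist_eq_norm]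
    simp
  have hmp := measurePreserving_add_right (volume : Measure ℂ) c
  have hme : MeasurableEmbedding (fun w : ℂ => w + c) := (MeasurableEquiv.addRight c).measurableEmbedding
  constructor
  · rw [← hmp.integrableOn_comp_preimage hme, hpre, hfun]
    exact integrable_aux _ _ hab R
  · rw [← hmp.setIntegral_preimage_emb hme, hpre]
    have e := disc_aux _ _ hab R hR ha hb
    have e2 : ∫ u in Metric.ball (0:ℂ) R, 1 / ((starRingEnd ℂ) (u + c + 1) * (u + c - 1))
        = ∫ u in Metric.ball (0:ℂ) R, 1 / ((starRingEnd ℂ) (u - (-1 - c)) * (u - (1 - c))) := by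
      rw [← hfun]; rfl
    rw [e2, e]
    have hlog : 1 - (R:ℂ) ^ 2 / ((1 - c) * (starRingEnd ℂ) (-1 - c))
        = Complex.exp ((Real.log (2 * Real.sin θ) : ℂ) + Complex.I * ((Real.pi / 2 : ℝ) - θ)) := by
      have hE : Complex.exp ((Real.log (2 * Real.sin θ) : ℂ) + Complex.I * ((Real.pi / 2 : ℝ) - θ))
          = 2 * Complex.sin θ * (Complex.sin θ + Complex.cos θ * Complex.I) := by
        rw [Complex.exp_add, ← Complex.ofReal_exp, Real.exp_log (by positivity),
          show Complex.I * (((Real.pi / 2 : ℝ) : ℂ) - θ) = (((Real.pi / 2 : ℝ) : ℂ) - θ) * Complex.I by ring,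
          Complex.exp_mul_I]
        push_cast
        rw [Complex.cos_pi_div_two_sub, Complex.sin_pi_div_two_sub]
      rw [hE]
      have hca : 1 - c = R * (Complex.sin θ - Complex.cos θ * Complex.I) := by
        rw [hc, hcot, hRdef]; push_cast; field_simp
      have hcb : (starRingEnd ℂ) (-1 - c) = - (R * (Complex.sin θ - Complex.cos θ * Complex.I)) := by
        rw [← hca, hc]; simp [-Complex.ofReal_cot]; ring
      have hRC : (R:ℂ) ≠ 0 := by exact_mod_cast hR.ne'
      have hu : (Complex.sin θ - Complex.cos θ * Complex.I) * (Complex.sin θ + Complex.cos θ * Complex.I) = 1 := by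
        linear_combination Complex.sin_sq_add_cos_sq (θ:ℂ) - Complex.cos θ ^ 2 * Complex.I_sq
      have hu0 : Complex.sin θ - Complex.cos θ * Complex.I ≠ 0 := left_ne_zero_of_mul_eq_one hu
      rw [hca, hcb]
      have hinv : (R:ℂ) ^ 2 / (R * (Complex.sin θ - Complex.cos θ * Complex.I) * -(R * (Complex.sin θ - Complex.cos θ * Complex.I)))
          = - (Complex.sin θ + Complex.cos θ * Complex.I) ^ 2 := by
        rw [div_eq_iff (by simp [hRC, hu0])]
        linear_combination (-(R:ℂ) ^ 2 * ((Complex.sin θ - Complex.cos θ * Complex.I) * (Complex.sin θ + Complex.cos θ * Complex.I) + 1)) * hu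
      rw [hinv]
      linear_combination (-1 : ℂ) * Complex.sin_sq_add_cos_sq (θ:ℂ) + Complex.cos θ ^ 2 * Complex.I_sq
    have him : ((Real.log (2 * Real.sin θ) : ℂ) + Complex.I * ((Real.pi / 2 : ℝ) - θ)).im = Real.pi / 2 - θ := by
      rw [← Complex.ofReal_sub]; simp
    rw [hlog, Complex.log_exp (by rw [him]; linarith) (by rw [him]; linarith)]
    have : (Real.pi : ℂ) ≠ 0 := by exact_mod_cast Real.pi_ne_zero
    field_simp
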